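/- Assume the uniform ellipticity condition (D3) and that the probability measure m on ℝ has a finite first moment. Let F be the unique weak solution in 𝓕 of the Cauchy problem with initial condition F₀ = H*m, and suppose that for every s > 0 the function F_s is continuous on ℝ. Then for all t ≥ 0, ∫₀¹ F_t^{-1}(u) du = ∫₀¹ F₀^{-1}(u) du + t·B(1); in particular, if B(1) = 0 the expectation of F_t is constant in time. -/

import Mathlib

open MeasureTheory Set Filter Topology Function
open scoped ENNReal

noncomputable section

/-- `primitive f u = ∫₀^u f(v) dv`. -/
def primitive (f : ℝ → ℝ) : ℝ → ℝ := fun u => ∫ v in (0:ℝ)..u, f v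

/-- The cumulative distribution function `H * μ` of a measure `μ` on `ℝ`. -/
def cdfOf (μ : MeasureTheory.Measure ℝ) : ℝ → ℝ := fun x => (μ (Set.Iic x)).toReal

/-- Pseudo-inverse of a cdf: `F⁻¹(u) = inf {x | F x > u}`. -/
def pinv (F : ℝ → ℝ) (u : ℝ) : ℝ := sInf {x : ℝ | u < F x}

/-- Wasserstein distance of order `p` between two cdfs, in `[0,∞]`. -/
def Wdist (p : ℝ) (F G : ℝ → ℝ) : ℝ≥0∞ :=
  (∫⁻ u in Set.Ioo (0:ℝ) 1, ENNReal.ofReal (|pinv F u - pinv G u| ^ p)) ^ (1/p)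

/-- `F` is the cumulative distribution function of a probability measure on `ℝ`. -/
def IsCDF (F : ℝ → ℝ) : Prop :=
  Monotone F ∧ (∀ x : ℝ, ContinuousWithinAt F (Set.Ici x) x) ∧
    Tendsto F atBot (nhds 0) ∧ Tendsto F atTop (nhds 1)

/-- `F` solves the stationary equation `(1/2) ∂ₓₓ (A(F)) - ∂ₓ (B(F)) = 0` in the sense
of distributions. -/
def IsStationarySolution (A B : ℝ → ℝ) (F : ℝ → ℝ) : Prop :=
  ∀ φ : ℝ → ℝ, ContDiff ℝ (⊤ : ℕ∞) φ → HasCompactSupport φ →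
    (1/2) * (∫ x : ℝ, A (F x) * deriv (deriv φ) x) + (∫ x : ℝ, B (F x) * deriv φ x) = 0

/-- `Ψ(u) = ∫_{1/2}^u a(v) / (2 B(v)) dv`. -/
def Psi (a b : ℝ → ℝ) (u : ℝ) : ℝ := ∫ v in (1/2:ℝ)..u, a v / (2 * primitive b v)

/-- The inverse of `Ψ`, extended by `1` above `lim_{u→1} Ψ(u)` and by `0` below
`lim_{u→0} Ψ(u)` when these limits are finite. -/
def PsiInv (a b : ℝ → ℝ) (x : ℝ) : ℝ :=
  sSup {u : ℝ | u ∈ Set.Ioo (0:ℝ) 1 ∧ Psi a b u ≤ x}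

/-- `F` is a weak solution of `∂ₜ F = (1/2) ∂ₓₓ (A (F)) - ∂ₓ (B (F))` with
initial condition `F₀`. -/
def IsWeakSolution (A B : ℝ → ℝ) (F₀ : ℝ → ℝ) (F : ℝ → ℝ → ℝ) : Prop :=
  ∀ g : ℝ → ℝ → ℝ, ContDiff ℝ (⊤ : ℕ∞) (Function.uncurry g) →
    HasCompactSupport (Function.uncurry g) →
    ∀ t : ℝ, 0 ≤ t →
      ((∫ x : ℝ, g t x * F t x) - ∫ x : ℝ, g 0 x * F₀ x) =
        ∫ x : ℝ, ∫ s in (0:ℝ)..t,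
          ((1/2) * A (F s x) * deriv (deriv (fun y => g s y)) x
            + B (F s x) * deriv (fun y => g s y) x
            + F s x * deriv (fun r => g r x) s)

/-- Membership in the class `𝓕`. -/
def MemF (F : ℝ → ℝ → ℝ) : Prop :=
  ∃ P : ℝ → ProbabilityMeasure ℝ,
    ContinuousOn P (Set.Ici 0) ∧
    (∀ t : ℝ, 0 ≤ t → Integrable (fun x => |x|) (P t : Measure ℝ)) ∧
    (∀ T : ℝ, 0 < T → IntegrableOn (fun t => ∫ x, |x| ∂(P t : Measure ℝ)) (Set.Icc 0 T)) ∧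
    (∀ t : ℝ, 0 ≤ t → ∀ x : ℝ, F t x = ((P t : Measure ℝ) (Set.Iic x)).toReal)

lemma cdfOf_eq_cdf (μ : Measure ℝ) [IsProbabilityMeasure μ] (x : ℝ) :
    cdfOf μ x = ProbabilityTheory.cdf μ x := by
  rw [ProbabilityTheory.cdf_eq_real]; rfl

lemma cdfOf_mono (μ : Measure ℝ) [IsProbabilityMeasure μ] : Monotone (cdfOf μ) := by
  intro x y hxy
  rw [cdfOf_eq_cdf, cdfOf_eq_cdf]
  exact ProbabilityTheory.monotone_cdf μ hxy

lemma cdfOf_mem (μ : Measure ℝ) [IsProbabilityMeasure μ] (x : ℝ) : cdfOf μ x ∈ Icc (0:ℝ) 1 := by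
  rw [cdfOf_eq_cdf]
  exact ⟨ProbabilityTheory.cdf_nonneg μ x, ProbabilityTheory.cdf_le_one μ x⟩

lemma cdfOf_atTop (μ : Measure ℝ) [IsProbabilityMeasure μ] : Tendsto (cdfOf μ) atTop (𝓝 1) := by
  rw [show cdfOf μ = ProbabilityTheory.cdf μ from funext (cdfOf_eq_cdf μ)]
  exact ProbabilityTheory.tendsto_cdf_atTop μ

lemma cdfOf_atBot (μ : Measure ℝ) [IsProbabilityMeasure μ] : Tendsto (cdfOf μ) atBot (𝓝 0) := by
  rw [show cdfOf μ = ProbabilityTheory.cdf μ from funext (cdfOf_eq_cdf μ)]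
  exact ProbabilityTheory.tendsto_cdf_atBot μ

lemma cdfOf_right (μ : Measure ℝ) [IsProbabilityMeasure μ] (x : ℝ) :
    ContinuousWithinAt (cdfOf μ) (Ici x) x := by
  rw [show cdfOf μ = ProbabilityTheory.cdf μ from funext (cdfOf_eq_cdf μ)]
  exact (ProbabilityTheory.cdf μ).right_continuous x

lemma pinv_bdd (μ : Measure ℝ) [IsProbabilityMeasure μ] {u : ℝ} (hu : u ∈ Ioo (0:ℝ) 1) :
    BddBelow {x : ℝ | u < cdfOf μ x} := by
  obtain ⟨y, hy⟩ := ((cdfOf_atBot μ).eventually_lt_const hu.1).exists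
  refine ⟨y, fun x hx => ?_⟩
  by_contra! h
  have := cdfOf_mono μ h.le
  have hx' : u < cdfOf μ x := hx
  linarith

lemma pinv_ne (μ : Measure ℝ) [IsProbabilityMeasure μ] {u : ℝ} (hu : u ∈ Ioo (0:ℝ) 1) :
    {x : ℝ | u < cdfOf μ x}.Nonempty :=
  ((cdfOf_atTop μ).eventually_const_lt hu.2).exists

lemma pinv_le (μ : Measure ℝ) [IsProbabilityMeasure μ] {u x : ℝ} (hu : u ∈ Ioo (0:ℝ) 1)
    (h : u < cdfOf μ x) : pinv (cdfOf μ) u ≤ x := csInf_le (pinv_bdd μ hu) h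

lemma le_of_pinv_le (μ : Measure ℝ) [IsProbabilityMeasure μ] {u x : ℝ} (hu : u ∈ Ioo (0:ℝ) 1)
    (h : pinv (cdfOf μ) u ≤ x) : u ≤ cdfOf μ x := by
  have h1 : Tendsto (cdfOf μ) (𝓝[>] x) (𝓝 (cdfOf μ x)) :=
    (cdfOf_right μ x).mono_left (nhdsWithin_mono _ Ioi_subset_Ici_self)
  refine ge_of_tendsto h1 ?_
  filter_upwards [self_mem_nhdsWithin] with y hy
  obtain ⟨z, hz, hzy⟩ := exists_lt_of_csInf_lt (pinv_ne μ hu) (lt_of_le_of_lt h hy)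
  exact le_trans (le_of_lt hz) (cdfOf_mono μ hzy.le)

lemma pinv_monoOn (μ : Measure ℝ) [IsProbabilityMeasure μ] :
    MonotoneOn (pinv (cdfOf μ)) (Ioo 0 1) := by
  intro u hu v hv huv
  exact csInf_le_csInf (pinv_bdd μ hu) (pinv_ne μ hv) (fun x hx => lt_of_le_of_lt huv hx)

lemma pinv_map (μ : Measure ℝ) [IsProbabilityMeasure μ] :
    (volume.restrict (Ioo (0:ℝ) 1)).map (pinv (cdfOf μ)) = μ := by
  have hm : AEMeasurable (pinv (cdfOf μ)) (volume.restrict (Ioo (0:ℝ) 1)) :=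
    aemeasurable_restrict_of_monotoneOn measurableSet_Ioo (pinv_monoOn μ)
  refine Measure.ext_of_Iic _ _ (fun x => ?_)
  rw [Measure.map_apply_of_aemeasurable hm measurableSet_Iic]
  have hx := cdfOf_mem μ x
  have e : μ (Iic x) = ENNReal.ofReal (cdfOf μ x) := by
    simp [cdfOf]
  rw [e, Measure.restrict_apply₀' measurableSet_Ioo.nullMeasurableSet]
  apply le_antisymm
  · calc volume (pinv (cdfOf μ) ⁻¹' Iic x ∩ Ioo 0 1) ≤ volume (Ioc 0 (cdfOf μ x)) := by
          apply measure_mono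
          rintro u ⟨h, hu⟩
          exact ⟨hu.1, le_of_pinv_le μ hu h⟩
      _ = _ := by simp
  · calc ENNReal.ofReal (cdfOf μ x) = volume (Ioo 0 (cdfOf μ x)) := by simp
      _ ≤ _ := by
          apply measure_mono
          rintro u ⟨h, hu⟩
          have h1 : u ∈ Ioo (0:ℝ) 1 := ⟨h, lt_of_lt_of_le hu hx.2⟩
          exact ⟨pinv_le μ h1 hu, h1⟩

lemma integral_pinv (μ : Measure ℝ) [IsProbabilityMeasure μ] :
    ∫ u in Ioo (0:ℝ) 1, pinv (cdfOf μ) u = ∫ x, x ∂μ := by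
  have hm : AEMeasurable (pinv (cdfOf μ)) (volume.restrict (Ioo (0:ℝ) 1)) :=
    aemeasurable_restrict_of_monotoneOn measurableSet_Ioo (pinv_monoOn μ)
  have := integral_map (f := fun x : ℝ => x) hm (by fun_prop)
  rw [pinv_map] at this
  exact this.symm

/-- kernel `1_{w ≤ x} - 1_{0 ≤ x}` -/
def kerD (w x : ℝ) : ℝ := (Ici w).indicator 1 x - (Ici (0:ℝ)).indicator 1 x

lemma kerD_meas : Measurable (uncurry kerD) := by
  have h1 : (fun p : ℝ × ℝ => (Ici p.1).indicator (1 : ℝ → ℝ) p.2)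
      = {p : ℝ × ℝ | p.1 ≤ p.2}.indicator 1 := by
    ext p; simp [indicator]
  have h2 : Measurable (fun p : ℝ × ℝ => (Ici p.1).indicator (1 : ℝ → ℝ) p.2) := by
    rw [h1]
    exact measurable_one.indicator (measurableSet_le measurable_fst measurable_snd)
  have h3 : Measurable (fun p : ℝ × ℝ => (Ici (0:ℝ)).indicator (1 : ℝ → ℝ) p.2) :=
    (measurable_one.indicator measurableSet_Ici).comp measurable_snd
  exact h2.sub h3

lemma kerD_eq (w x : ℝ) :
    kerD w x = (Ico w 0).indicator 1 x - (Ico 0 w).indicator 1 x := by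
  simp only [kerD, indicator, mem_Ici, mem_Ico, Pi.one_apply]
  grind

lemma kerD_abs (w x : ℝ) :
    ‖kerD w x‖ = (Ico w 0).indicator 1 x + (Ico 0 w).indicator 1 x := by
  rw [kerD_eq]
  simp only [indicator, mem_Ico, Pi.one_apply, Real.norm_eq_abs]
  split_ifs <;> first | (exfalso; grind) | simp

lemma ind_int (w z : ℝ) : Integrable ((Ico w z).indicator (1 : ℝ → ℝ)) := by
  rw [integrable_indicator_iff measurableSet_Ico]
  exact integrableOn_const (by simp) (by simp)

lemma kerD_int (w : ℝ) : Integrable (kerD w) := by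
  rw [show kerD w = _ from funext (kerD_eq w)]
  exact (ind_int _ _).sub (ind_int _ _)

lemma kerD_integral (w : ℝ) : ∫ x, kerD w x = - w := by
  simp_rw [kerD_eq]
  rw [integral_sub (ind_int _ _) (ind_int _ _), integral_indicator_one measurableSet_Ico,
    integral_indicator_one measurableSet_Ico]
  simp only [Real.volume_real_Ico]
  grind

lemma kerD_integral_abs (w : ℝ) : ∫ x, ‖kerD w x‖ = |w| := by
  simp_rw [kerD_abs]
  rw [integral_add (ind_int _ _) (ind_int _ _), integral_indicator_one measurableSet_Ico,
    integral_indicator_one measurableSet_Ico]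
  simp only [Real.volume_real_Ico]
  grind

def Dfun (μ : Measure ℝ) (x : ℝ) : ℝ := cdfOf μ x - (Ici (0:ℝ)).indicator 1 x

lemma kerD_prod (μ : Measure ℝ) [IsProbabilityMeasure μ] (hm : Integrable (fun x => |x|) μ) :
    Integrable (uncurry kerD) (μ.prod volume) := by
  rw [integrable_prod_iff kerD_meas.aestronglyMeasurable]
  refine ⟨Eventually.of_forall fun w => kerD_int w, ?_⟩
  simp only [uncurry, kerD_integral_abs]
  exact hm

lemma Dfun_eq (μ : Measure ℝ) [IsProbabilityMeasure μ] (x : ℝ) :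
    ∫ w, kerD w x ∂μ = Dfun μ x := by
  have e : ∀ w, kerD w x = (Iic x).indicator 1 w - (Ici (0:ℝ)).indicator 1 x := by
    intro w; simp [kerD, indicator]
  simp_rw [e]
  rw [integral_sub, integral_indicator_one measurableSet_Iic]
  · simp [Dfun, cdfOf, Measure.real]
  · rw [integrable_indicator_iff measurableSet_Iic]
    exact integrableOn_const (by simp) (by simp)
  · exact integrable_const _

lemma Dfun_integrable (μ : Measure ℝ) [IsProbabilityMeasure μ]
    (hm : Integrable (fun x => |x|) μ) : Integrable (Dfun μ) := by
  have := (kerD_prod μ hm).integral_prod_right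
  simpa [uncurry, Dfun_eq] using this

lemma Dfun_integral (μ : Measure ℝ) [IsProbabilityMeasure μ]
    (hm : Integrable (fun x => |x|) μ) :
    ∫ x, Dfun μ x = - ∫ u in Ioo (0:ℝ) 1, pinv (cdfOf μ) u := by
  have := integral_integral_swap (kerD_prod μ hm)
  simp_rw [kerD_integral, Dfun_eq] at this
  rw [← this, integral_neg, integral_pinv]

lemma singleton_null (μ : Measure ℝ) [IsProbabilityMeasure μ] (hc : Continuous (cdfOf μ)) (x : ℝ) :
    μ {x} = 0 := by
  have e : ⇑(ProbabilityTheory.cdf μ) = cdfOf μ := (funext (cdfOf_eq_cdf μ)).symm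
  rw [← ProbabilityTheory.measure_cdf μ, StieltjesFunction.measure_singleton, e,
    hc.continuousWithinAt.leftLim_eq]
  simp

lemma time_cont (P : ℝ → ProbabilityMeasure ℝ) (hP : ContinuousOn P (Ici 0))
    (hc : ∀ s, 0 < s → Continuous (cdfOf (P s : Measure ℝ))) (x : ℝ) :
    ContinuousOn (fun s => cdfOf (P s : Measure ℝ) x) (Ioi 0) := by
  intro s hs
  apply ContinuousAt.continuousWithinAt
  have h1 : Tendsto P (𝓝 s) (𝓝 (P s)) := (hP.continuousAt (Ici_mem_nhds hs))
  have h2 := ProbabilityMeasure.tendsto_measure_of_null_frontier_of_tendsto' h1 (E := Iic x)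
    (by rw [frontier_Iic]; exact singleton_null _ (hc s hs) x)
  exact (ENNReal.tendsto_toReal (measure_ne_top _ _)).comp h2

section K
variable (P : ℝ → ProbabilityMeasure ℝ) (G : ℝ → ℝ) (t : ℝ)

def Kfun (x : ℝ) : ℝ := ∫ s in (0:ℝ)..t, G (cdfOf (P s : Measure ℝ) x)

lemma K_meas (hP : ContinuousOn P (Ici 0))
    (hc : ∀ s, 0 < s → Continuous (cdfOf (P s : Measure ℝ)))
    (hG : ContinuousOn G (Icc 0 1)) (ht : 0 ≤ t) (x : ℝ) :
    AEStronglyMeasurable (fun s => G (cdfOf (P s : Measure ℝ) x))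
      (volume.restrict (Set.uIoc 0 t)) := by
  rw [uIoc_of_le ht]
  refine ContinuousOn.aestronglyMeasurable ?_ measurableSet_Ioc
  exact hG.comp ((time_cont P hP hc x).mono (fun s hs => hs.1)) (fun s _ => cdfOf_mem _ x)

lemma K_int (hP : ContinuousOn P (Ici 0))
    (hc : ∀ s, 0 < s → Continuous (cdfOf (P s : Measure ℝ)))
    (hG : ContinuousOn G (Icc 0 1)) (ht : 0 ≤ t) (x : ℝ) :
    IntervalIntegrable (fun s => G (cdfOf (P s : Measure ℝ) x)) volume 0 t := by
  obtain ⟨C, hC⟩ := isCompact_Icc.exists_bound_of_continuousOn hG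
  exact (intervalIntegrable_const (c := C)).mono_fun' (K_meas P G t hP hc hG ht x)
    (Eventually.of_forall fun s => hC _ (cdfOf_mem _ x))

lemma K_bdd (hG : ContinuousOn G (Icc 0 1)) :
    ∃ C, ∀ x, ‖Kfun P G t x‖ ≤ C := by
  obtain ⟨C, hC⟩ := isCompact_Icc.exists_bound_of_continuousOn hG
  exact ⟨C * |t - 0|, fun x => intervalIntegral.norm_integral_le_of_norm_le_const
    (fun s _ => hC _ (cdfOf_mem _ x))⟩

lemma K_lim (hP : ContinuousOn P (Ici 0))
    (hc : ∀ s, 0 < s → Continuous (cdfOf (P s : Measure ℝ)))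
    (hG : ContinuousOn G (Icc 0 1)) (ht : 0 ≤ t) (l : Filter ℝ) [l.IsCountablyGenerated]
    (v : ℝ → ℝ) (hv : ∀ s, v s ∈ Icc (0:ℝ) 1)
    (h : ∀ s, 0 < s → Tendsto (cdfOf (P s : Measure ℝ)) l (𝓝 (v s))) :
    Tendsto (Kfun P G t) l (𝓝 (∫ s in (0:ℝ)..t, G (v s))) := by
  obtain ⟨C, hC⟩ := isCompact_Icc.exists_bound_of_continuousOn hG
  refine intervalIntegral.tendsto_integral_filter_of_dominated_convergence (fun _ => C)
    (Eventually.of_forall fun x => K_meas P G t hP hc hG ht x)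
    (Eventually.of_forall fun x => Eventually.of_forall fun s _ => hC _ (cdfOf_mem _ x))
    intervalIntegrable_const (Eventually.of_forall fun s hs => ?_)
  rw [uIoc_of_le ht] at hs
  exact (hG (v s) (hv s)).tendsto.comp (tendsto_nhdsWithin_iff.2
    ⟨h s hs.1, Eventually.of_forall fun x => cdfOf_mem _ x⟩)

lemma K_cont (hP : ContinuousOn P (Ici 0))
    (hc : ∀ s, 0 < s → Continuous (cdfOf (P s : Measure ℝ)))
    (hG : ContinuousOn G (Icc 0 1)) (ht : 0 ≤ t) : Continuous (Kfun P G t) := by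
  rw [continuous_iff_continuousAt]
  intro x
  exact K_lim P G t hP hc hG ht (𝓝 x) (fun s => cdfOf (P s : Measure ℝ) x)
    (fun s => cdfOf_mem _ x) (fun s hs => (hc s hs).tendsto x)

lemma K_top (hP : ContinuousOn P (Ici 0))
    (hc : ∀ s, 0 < s → Continuous (cdfOf (P s : Measure ℝ)))
    (hG : ContinuousOn G (Icc 0 1)) (ht : 0 ≤ t) :
    Tendsto (Kfun P G t) atTop (𝓝 (t * G 1)) := by
  have := K_lim P G t hP hc hG ht atTop (fun _ => 1) (by simp) (fun s _ => cdfOf_atTop _)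
  simpa using this

lemma K_bot (hP : ContinuousOn P (Ici 0))
    (hc : ∀ s, 0 < s → Continuous (cdfOf (P s : Measure ℝ)))
    (hG : ContinuousOn G (Icc 0 1)) (ht : 0 ≤ t) :
    Tendsto (Kfun P G t) atBot (𝓝 (t * G 0)) := by
  have := K_lim P G t hP hc hG ht atBot (fun _ => 0) (by simp) (fun s _ => cdfOf_atBot _)
  simpa using this

end K

lemma prim_cont (f : ℝ → ℝ) (hf : ContinuousOn f (Icc 0 1)) :
    ContinuousOn (primitive f) (Icc 0 1) := by
  have := intervalIntegral.continuousOn_primitive_interval (f := f) (a := 0) (b := 1)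
    (μ := volume) (by rw [uIcc_of_le zero_le_one]; exact hf.integrableOn_Icc)
  rwa [uIcc_of_le zero_le_one] at this

/-- limit of the drift term -/
lemma drift_lim (K χ : ℝ → ℝ) (hK : Continuous K) (C L : ℝ) (hC : ∀ x, ‖K x‖ ≤ C)
    (htop : Tendsto K atTop (𝓝 L)) (hbot : Tendsto K atBot (𝓝 0))
    (hχ : ContDiff ℝ 1 χ) (hs : HasCompactSupport χ) :
    Tendsto (fun R : ℝ => ∫ y, K (R * y) * deriv χ y) atTop (𝓝 (- (L * χ 0))) := by
  have hd : Continuous (deriv χ) := hχ.continuous_deriv le_rfl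
  have e : - (L * χ 0) = ∫ y, (Ioi (0:ℝ)).indicator (fun y => L * deriv χ y) y := by
    rw [integral_indicator measurableSet_Ioi, integral_const_mul,
      hs.integral_Ioi_deriv_eq hχ 0]
    ring
  rw [e]
  refine tendsto_integral_filter_of_dominated_convergence (fun y => C * ‖deriv χ y‖)
    (Eventually.of_forall fun R => by
      apply Continuous.aestronglyMeasurable; fun_prop)
    (Eventually.of_forall fun R => Eventually.of_forall fun y => by
      rw [norm_mul]; gcongr; exact hC _)
    (((hd.integrable_of_hasCompactSupport hs.deriv).norm).const_mul C) ?_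
  have h0 : ∀ᵐ y : ℝ, y ≠ 0 := by simp [ae_iff]
  filter_upwards [h0] with y hy
  rcases lt_or_gt_of_ne hy with hy | hy
  · rw [indicator_of_notMem (by simpa using hy.le)]
    have := (hbot.comp (tendsto_id.atTop_mul_const_of_neg hy)).mul_const (deriv χ y)
    simpa using this
  · rw [indicator_of_mem (by simpa using hy)]
    exact (htop.comp (tendsto_id.atTop_mul_const hy)).mul_const (deriv χ y)

/-- the diffusion term vanishes -/
lemma diff_lim (K ψ : ℝ → ℝ) (C : ℝ) (hC : ∀ x, ‖K x‖ ≤ C)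
    (hψ : Continuous ψ) (hs : HasCompactSupport ψ) :
    Tendsto (fun R : ℝ => R⁻¹ * ∫ y, K (R * y) * ψ y) atTop (𝓝 0) := by
  refine squeeze_zero_norm' (a := fun R => R⁻¹ * ∫ y, C * ‖ψ y‖) ?_ ?_
  · filter_upwards [eventually_gt_atTop 0] with R hR
    rw [norm_mul, Real.norm_of_nonneg (inv_nonneg.2 hR.le)]
    gcongr
    refine norm_integral_le_of_norm_le ((hψ.integrable_of_hasCompactSupport hs).norm.const_mul C)
      (Eventually.of_forall fun y => ?_)
    rw [norm_mul]; gcongr; exact hC _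
  · simpa using tendsto_inv_atTop_zero.mul_const (∫ y, C * ‖ψ y‖)

/-- limit of the left-hand side -/
lemma lhs_lim (D χ : ℝ → ℝ) (hD : Integrable D) (hχ : Continuous χ) (hχ1 : ∀ x, ‖χ x‖ ≤ 1)
    (h0 : χ 0 = 1) : Tendsto (fun R : ℝ => ∫ x, χ (x / R) * D x) atTop (𝓝 (∫ x, D x)) := by
  refine tendsto_integral_filter_of_dominated_convergence (fun y => ‖D y‖)
    (Eventually.of_forall fun R => by
      refine AEStronglyMeasurable.mul ?_ hD.1
      apply Continuous.aestronglyMeasurable; fun_prop)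
    (Eventually.of_forall fun R => Eventually.of_forall fun y => by
      rw [norm_mul]; exact mul_le_of_le_one_left (norm_nonneg _) (hχ1 _))
    hD.norm (Eventually.of_forall fun x => ?_)
  have h1 : Tendsto (fun R : ℝ => x / R) atTop (𝓝 0) := tendsto_const_nhds.div_atTop tendsto_id
  have := ((hχ.tendsto 0).comp h1).mul_const (D x)
  simpa [h0] using this

lemma cut_int (χ h : ℝ → ℝ) (hχ : Continuous χ) (hs : HasCompactSupport χ)
    (hh : Measurable h) (hb : ∀ x, ‖h x‖ ≤ 1) : Integrable (fun x => χ x * h x) := by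
  refine (hχ.integrable_of_hasCompactSupport hs).mul_bdd (c := 1) hh.aestronglyMeasurable
    (Eventually.of_forall hb)

lemma cut_split (μ : Measure ℝ) [IsProbabilityMeasure μ] (χ : ℝ → ℝ) (hχ : Continuous χ)
    (hs : HasCompactSupport χ) :
    ∫ x, χ x * cdfOf μ x
      = (∫ x, χ x * Dfun μ x) + ∫ x, χ x * (Ici (0:ℝ)).indicator 1 x := by
  have i1 : Integrable (fun x => χ x * cdfOf μ x) :=
    cut_int χ _ hχ hs (cdfOf_mono μ).measurable (fun x => by
      have := cdfOf_mem μ x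
      rw [Real.norm_of_nonneg this.1]; exact this.2)
  have i2 : Integrable (fun x => χ x * (Ici (0:ℝ)).indicator 1 x) :=
    cut_int χ _ hχ hs (measurable_one.indicator measurableSet_Ici) (fun x => by
      by_cases h : 0 ≤ x <;> simp [indicator, h])
  simp only [Dfun, mul_sub]
  rw [integral_sub i1 i2]
  ring

lemma weak_cut (A B : ℝ → ℝ) (hA : ContinuousOn A (Icc 0 1)) (hB : ContinuousOn B (Icc 0 1))
    (m : Measure ℝ) (F : ℝ → ℝ → ℝ) (hF : IsWeakSolution A B (cdfOf m) F)
    (P : ℝ → ProbabilityMeasure ℝ) (hP : ContinuousOn P (Ici 0))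
    (hc : ∀ s, 0 < s → Continuous (cdfOf (P s : Measure ℝ)))
    (hFP : ∀ s, 0 ≤ s → F s = cdfOf (P s : Measure ℝ))
    (χ : ℝ → ℝ) (hχ : ContDiff ℝ (⊤ : ℕ∞) χ) (hs : HasCompactSupport χ)
    (t : ℝ) (ht : 0 ≤ t) (R : ℝ) (hR : 0 < R) :
    (∫ x, χ (x / R) * cdfOf (P t : Measure ℝ) x) - ∫ x, χ (x / R) * cdfOf m x
      = (1/2) * (R⁻¹ * ∫ y, Kfun P A t (R * y) * deriv (deriv χ) y)
        + ∫ y, Kfun P B t (R * y) * deriv χ y := by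
  let φ : ContDiffBump (0:ℝ) := ⟨t + 1, t + 2, by linarith, by linarith⟩
  have hφ1 : ∀ s ∈ Icc 0 t, φ s = 1 := fun s h => φ.one_of_mem_closedBall (by
    simp only [Metric.mem_closedBall, dist_zero_right, Real.norm_eq_abs, abs_of_nonneg h.1]
    change s ≤ t + 1
    linarith [h.2])
  have hφd : ∀ s ∈ Icc 0 t, deriv φ s = 0 := fun s h => by
    have : φ =ᶠ[𝓝 s] 1 := φ.eventuallyEq_one_of_mem_ball (by
      simp only [Metric.mem_ball, dist_zero_right, Real.norm_eq_abs, abs_of_nonneg h.1]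
      change s < t + 1
      linarith [h.2])
    rw [this.deriv_eq]; simp
  have hd1 : Differentiable ℝ χ := hχ.differentiable (by simp)
  have hχ' : ContDiff ℝ (⊤ : ℕ∞) (deriv χ) := (contDiff_infty_iff_deriv.1 hχ).2
  have hd2 : Differentiable ℝ (deriv χ) := hχ'.differentiable (by simp)
  have hχ'' : Continuous (deriv (deriv χ)) := ((contDiff_infty_iff_deriv.1 hχ').2).continuous
  have D1 : ∀ s : ℝ, deriv (fun y => φ s * χ (y / R)) = fun y => φ s * (deriv χ (y / R) * R⁻¹) := by
    intro s; ext y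
    have h1 : HasDerivAt (fun y : ℝ => y / R) R⁻¹ y := by
      simpa using (hasDerivAt_id y).div_const R
    exact (((hd1 (y / R)).hasDerivAt.comp y h1).const_mul (φ s)).deriv
  have D2 : ∀ s : ℝ, deriv (deriv (fun y => φ s * χ (y / R)))
      = fun y => φ s * (deriv (deriv χ) (y / R) * R⁻¹ * R⁻¹) := by
    intro s; rw [D1]; ext y
    have h1 : HasDerivAt (fun y : ℝ => y / R) R⁻¹ y := by
      simpa using (hasDerivAt_id y).div_const R
    exact ((((hd2 (y / R)).hasDerivAt.comp y h1).mul_const R⁻¹).const_mul (φ s)).deriv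
  have key := hF (fun s x => φ s * χ (x / R)) (by
      have h1 : ContDiff ℝ (⊤ : ℕ∞) (φ : ℝ → ℝ) := φ.contDiff
      have h2 : ContDiff ℝ (⊤ : ℕ∞) (fun p : ℝ × ℝ => φ p.1) := h1.comp contDiff_fst
      have h3 : ContDiff ℝ (⊤ : ℕ∞) (fun p : ℝ × ℝ => χ (p.2 / R)) :=
        hχ.comp (contDiff_snd.div_const R)
      exact h2.mul h3) (by
      obtain ⟨M, hM⟩ := hs.isBounded.subset_closedBall (0:ℝ)
      refine HasCompactSupport.intro
        ((isCompact_closedBall (0:ℝ) (t+2)).prod (isCompact_closedBall (0:ℝ) (M * R))) ?_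
      rintro ⟨s, x⟩ hsx
      by_contra hne
      simp only [uncurry] at hne
      apply hsx
      constructor
      · have : s ∈ tsupport φ := subset_tsupport _ (left_ne_zero_of_mul hne)
        rw [φ.tsupport_eq] at this
        exact this
      · have : x / R ∈ tsupport χ := subset_tsupport _ (right_ne_zero_of_mul hne)
        have := hM this
        simp only [Metric.mem_closedBall, dist_zero_right, Real.norm_eq_abs, abs_div,
          abs_of_pos hR] at this ⊢
        exact (div_le_iff₀ hR).1 this) t ht
  simp only [hφ1 t ⟨ht, le_rfl⟩, hφ1 0 ⟨le_rfl, ht⟩, one_mul, hFP t ht] at key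
  rw [key]
  have inner : ∀ x, (∫ s in (0:ℝ)..t,
          ((1/2) * A (F s x) * deriv (deriv (fun y => φ s * χ (y / R))) x
            + B (F s x) * deriv (fun y => φ s * χ (y / R)) x
            + F s x * deriv (fun r => φ r * χ (x / R)) s))
      = (fun y => R⁻¹ * ((1/2) * (R⁻¹ * (Kfun P A t (R * y) * deriv (deriv χ) y))
        + Kfun P B t (R * y) * deriv χ y)) (x / R) := by
    intro x
    have e : ∀ s ∈ uIcc 0 t, ((1/2) * A (F s x) * deriv (deriv (fun y => φ s * χ (y / R))) x
            + B (F s x) * deriv (fun y => φ s * χ (y / R)) x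
            + F s x * deriv (fun r => φ r * χ (x / R)) s)
        = A (cdfOf (P s : Measure ℝ) x) * ((1/2) * (deriv (deriv χ) (x / R) * R⁻¹ * R⁻¹))
          + B (cdfOf (P s : Measure ℝ) x) * (deriv χ (x / R) * R⁻¹) := by
      intro s hs'
      rw [uIcc_of_le ht] at hs'
      rw [D2, D1, deriv_mul_const (φ.contDiff (n := 1)).contDiffAt.differentiableAt_one, hφd s hs', hφ1 s hs', hFP s hs'.1]
      ring
    rw [intervalIntegral.integral_congr e, intervalIntegral.integral_add
      ((K_int P A t hP hc hA ht x).mul_const _) ((K_int P B t hP hc hB ht x).mul_const _),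
      intervalIntegral.integral_mul_const, intervalIntegral.integral_mul_const]
    simp only [Kfun, mul_div_cancel₀ x hR.ne']
    ring
  refine (integral_congr_ae (Eventually.of_forall inner)).trans
    ((Measure.integral_comp_div (fun y => R⁻¹ * ((1/2) * (R⁻¹ * (Kfun P A t (R * y)
      * deriv (deriv χ) y)) + Kfun P B t (R * y) * deriv χ y)) R).trans ?_)
  rw [integral_const_mul, integral_add, integral_const_mul,
    integral_const_mul, abs_of_pos hR, smul_eq_mul, ← mul_assoc R, mul_inv_cancel₀ hR.ne', one_mul]
  · apply Integrable.const_mul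
    apply Integrable.const_mul
    have := K_cont P A t hP hc hA ht
    exact Continuous.integrable_of_hasCompactSupport (by fun_prop) hs.deriv.deriv.mul_left
  · have := K_cont P B t hP hc hB ht
    have := hd2.continuous
    exact Continuous.integrable_of_hasCompactSupport (by fun_prop) hs.deriv.mul_left

/-- Evolution of the expectation of the probabilistic solution: under (D3), if `F_s`
is continuous for every `s > 0`, then `∫₀¹ F_t⁻¹(u) du = ∫₀¹ F₀⁻¹(u) du + t B(1)`;
in particular the expectation is constant in time when `B(1) = 0`. -/
theorem expectation_evolution
    (a b : ℝ → ℝ)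
    (ha : ContinuousOn a (Set.Icc 0 1)) (hb : ContinuousOn b (Set.Icc 0 1))
    (ha0 : ∀ u ∈ Set.Icc (0:ℝ) 1, 0 ≤ a u)
    (hD3 : ∃ c > (0:ℝ), ∀ u ∈ Set.Icc (0:ℝ) 1, c ≤ a u)
    (m : Measure ℝ) [IsProbabilityMeasure m]
    (hm : Integrable (fun x => |x|) m)
    (F : ℝ → ℝ → ℝ)
    (hF : IsWeakSolution (primitive a) (primitive b) (cdfOf m) F) (hFmem : MemF F)
    (hFcont : ∀ s : ℝ, 0 < s → Continuous (fun x => F s x)) :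
    ∀ t : ℝ, 0 ≤ t →
      (∫ u in Set.Ioo (0:ℝ) 1, pinv (F t) u)
        = (∫ u in Set.Ioo (0:ℝ) 1, pinv (cdfOf m) u) + t * primitive b 1 := by
  intro t ht
  obtain ⟨P, hP, hPint, -, hFP'⟩ := hFmem
  have hFP : ∀ s, 0 ≤ s → F s = cdfOf (P s : Measure ℝ) := fun s hs => funext (hFP' s hs)
  have hc : ∀ s, 0 < s → Continuous (cdfOf (P s : Measure ℝ)) := fun s hs => by
    rw [← hFP s hs.le]; exact hFcont s hs
  have hA := prim_cont a ha
  have hB := prim_cont b hb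
  let χ : ContDiffBump (0:ℝ) := ⟨1, 2, by norm_num, by norm_num⟩
  have hχ : ContDiff ℝ (⊤ : ℕ∞) (χ : ℝ → ℝ) := χ.contDiff
  have hs : HasCompactSupport (χ : ℝ → ℝ) := χ.hasCompactSupport
  have hχ0 : χ 0 = 1 := χ.one_of_mem_closedBall (by simp [χ.rIn_pos.le])
  have hχ1 : ∀ x, ‖χ x‖ ≤ 1 := fun x => by
    rw [Real.norm_of_nonneg χ.nonneg]; exact χ.le_one
  have hχ'' : Continuous (deriv (deriv χ)) :=
    ((contDiff_infty_iff_deriv.1 (contDiff_infty_iff_deriv.1 hχ).2).2).continuous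
  obtain ⟨CA, hCA⟩ := K_bdd P (primitive a) t hA
  obtain ⟨CB, hCB⟩ := K_bdd P (primitive b) t hB
  have l1 := lhs_lim _ χ (Dfun_integrable (P t : Measure ℝ) (hPint t ht)) hχ.continuous hχ1 hχ0
  have l2 := lhs_lim _ χ (Dfun_integrable m hm) hχ.continuous hχ1 hχ0
  have l3 := diff_lim (Kfun P (primitive a) t) _ CA hCA hχ'' hs.deriv.deriv
  have hbot : Tendsto (Kfun P (primitive b) t) atBot (𝓝 0) := by
    have := K_bot P (primitive b) t hP hc hB ht
    simpa [primitive] using this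
  have l4 := drift_lim (Kfun P (primitive b) t) χ (K_cont P _ t hP hc hB ht) CB _ hCB
    (K_top P _ t hP hc hB ht) hbot (hχ.of_le (by exact_mod_cast le_top)) hs
  have lim := tendsto_nhds_unique_of_eventuallyEq (l1.sub l2) ((l3.const_mul (1/2)).add l4) (by
    filter_upwards [eventually_gt_atTop 0] with R hR
    rw [← weak_cut _ _ hA hB m F hF P hP hc hFP χ hχ hs t ht R hR]
    have cR : Continuous (fun x : ℝ => χ (x / R)) := by
      exact hχ.continuous.comp (continuous_id.div_const R)
    have sR : HasCompactSupport (fun x : ℝ => χ (x / R)) := by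
      have := hs.comp_homeomorph (Homeomorph.mulRight₀ R⁻¹ (inv_ne_zero hR.ne'))
      simpa [comp_def, div_eq_mul_inv] using this
    rw [cut_split (P t : Measure ℝ) _ cR sR, cut_split m _ cR sR]
    ring)
  rw [Dfun_integral _ (hPint t ht), Dfun_integral m hm, hχ0, ← hFP t ht] at lim
  linarith
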